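/- arXiv:1111.7294 — 8 statements merged into one kernel-verified Lean document; each statement's English description precedes it below -/
import Mathlib

section
/- Let E be a complex Hilbert space and let φ : E → E be an arbitrary mapping. There exists a constant M > 0 such that the kernel Φ_M(z,w) = M²·exp(⟨z,w⟩) − exp(⟨φ(z),φ(w)⟩) is a positive semi-definite kernel on E (equivalently, by Nordgren's criterion, the composition operator C_φ is bounded on the Segal–Bargmann space over E with norm at most M) if and only if there exist a bounded linear operator A on E with ‖A‖ ≤ 1 and a vector b ∈ E such that φ(z) = Az + b for all z ∈ E and A*b belongs to the range of (I − A*A)^{1/2}. -/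
open scoped InnerProductSpace ComplexOrder
open ContinuousLinearMap

/-- A function `Φ : X × X → ℂ` is a positive semi-definite kernel if for all finite families
of points `x j` and complex numbers `c j`, the sum `∑_{j,l} c j * conj (c l) * Φ (x l) (x j)`
is a nonnegative real number (expressed via the partial order on `ℂ`). -/
def IsPSDKernel {X : Type*} (Φ : X → X → ℂ) : Prop :=
  ∀ (m : ℕ) (x : Fin m → X) (c : Fin m → ℂ),
    0 ≤ ∑ j : Fin m, ∑ l : Fin m, c j * (starRingEnd ℂ) (c l) * Φ (x l) (x j)

/-- A bounded operator is positive: self-adjoint and with nonnegative quadratic form. -/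
def IsPosOp {E : Type*} [NormedAddCommGroup E] [InnerProductSpace ℂ E]
    (T : E →L[ℂ] E) : Prop :=
  (∀ x y : E, ⟪T x, y⟫_ℂ = ⟪x, T y⟫_ℂ) ∧ ∀ x : E, 0 ≤ ⟪T x, x⟫_ℂ

/-- `S` is the (unique) positive square root of `T`. -/
def IsPosSqrtOf {E : Type*} [NormedAddCommGroup E] [InnerProductSpace ℂ E]
    (S T : E →L[ℂ] E) : Prop :=
  IsPosOp S ∧ S ∘L S = T


lemma quad_eq {ι : Type*} [Fintype ι] (G : Matrix ι ι ℂ) (d : ι → ℂ) :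
    star d ⬝ᵥ (G.mulVec d) = ∑ i, ∑ j, (starRingEnd ℂ) (d i) * d j * G i j := by
  simp only [dotProduct, Matrix.mulVec, Finset.mul_sum, Pi.star_apply, RCLike.star_def]
  refine Finset.sum_congr rfl fun i _ => Finset.sum_congr rfl fun j _ => by ring

lemma pow_psd {ι : Type*} [Fintype ι] {G : Matrix ι ι ℂ} (hG : G.PosSemidef) (n : ℕ) :
    (Matrix.of fun i j => G i j ^ n).PosSemidef := by
  induction n with
  | zero =>
    convert Matrix.posSemidef_vecMulVec_self_star (R := ℂ) (fun _ : ι => (1 : ℂ)) using 1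
    ext i j; simp [Matrix.vecMulVec]
  | succ n ih =>
    have e : (Matrix.of fun i j => G i j ^ (n + 1)) =
        Matrix.hadamard (Matrix.of fun i j => G i j ^ n) G := by
      ext i j; simp [Matrix.hadamard, pow_succ]
    rw [e]
    exact ih.hadamard hG

lemma series_psd {ι : Type*} [Fintype ι] {G : Matrix ι ι ℂ} (hG : G.PosSemidef)
    (a : ℕ → ℝ) (ha : ∀ n, 0 ≤ a n) (B : ι → ι → ℂ)
    (hB : ∀ i j, HasSum (fun n => (a n : ℂ) * G i j ^ n) (B i j)) (d : ι → ℂ) :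
    0 ≤ ∑ i, ∑ j, (starRingEnd ℂ) (d i) * d j * B i j := by
  have h : HasSum (fun n => ∑ i, ∑ j, (starRingEnd ℂ) (d i) * d j * ((a n : ℂ) * G i j ^ n))
      (∑ i, ∑ j, (starRingEnd ℂ) (d i) * d j * B i j) :=
    hasSum_sum fun i _ => hasSum_sum fun j _ => (hB i j).mul_left _
  refine h.nonneg fun n => ?_
  have h1 := (pow_psd hG n).dotProduct_mulVec_nonneg d
  rw [quad_eq] at h1
  have h2 : (0:ℂ) ≤ (a n : ℂ) := by exact_mod_cast ha n
  have := mul_nonneg h2 h1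
  convert this using 1
  simp only [Finset.mul_sum, Matrix.of_apply]
  refine Finset.sum_congr rfl fun i _ => Finset.sum_congr rfl fun j _ => by ring

lemma hasSum_congr_aux {f g : ℕ → ℂ} {a : ℂ} (h : HasSum f a) (e : ∀ n, g n = f n) :
    HasSum g a := by
  rwa [show g = f from funext e]

lemma exp_series (z : ℂ) : HasSum (fun n : ℕ => (((n.factorial : ℝ)⁻¹ : ℝ) : ℂ) * z ^ n) (Complex.exp z) := by
  have := NormedSpace.expSeries_div_hasSum_exp (𝔸 := ℂ) z
  rw [← Complex.exp_eq_exp_ℂ] at this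
  refine hasSum_congr_aux this fun n => ?_
  push_cast; field_simp

lemma exp_series_sub (z : ℂ) (k : ℕ) :
    HasSum (fun n : ℕ => ((if n = k then 0 else (n.factorial : ℝ)⁻¹ : ℝ) : ℂ) * z ^ n)
      (Complex.exp z - z ^ k / (k.factorial : ℂ)) := by
  have h := (exp_series z).sub (hasSum_ite_eq k (z ^ k / (k.factorial : ℂ)))
  refine hasSum_congr_aux h fun n => ?_
  by_cases hn : n = k
  · subst hn; simp; ring
  · simp [hn]

lemma riesz_ext {W V : Type*} [AddCommGroup W] [Module ℂ W] [NormedAddCommGroup V]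
    [InnerProductSpace ℂ V] [CompleteSpace V] (e : W →ₗ[ℂ] V) (f : W →ₗ[ℂ] ℂ) (C : ℝ)
    (h : ∀ x, ‖f x‖ ≤ C * ‖e x‖) : ∃ u : V, ∀ x, f x = ⟪u, e x⟫_ℂ := by
  have hker : LinearMap.ker e ≤ LinearMap.ker f := by
    intro x hx
    have := h x
    rw [LinearMap.mem_ker] at hx ⊢
    rw [hx] at this
    simpa using this
  let g0 : LinearMap.range e →ₗ[ℂ] ℂ :=
    ((LinearMap.ker e).liftQ f hker) ∘ₗ e.quotKerEquivRange.symm.toLinearMap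
  have hg0 : ∀ x, g0 ⟨e x, LinearMap.mem_range_self e x⟩ = f x := by
    intro x
    have : e.quotKerEquivRange.symm ⟨e x, LinearMap.mem_range_self e x⟩ = (LinearMap.ker e).mkQ x :=
      LinearMap.quotKerEquivRange_symm_apply_image e x _
    simp [g0, this]
  let g := g0.mkContinuous C (by
    rintro ⟨_, x, rfl⟩
    rw [hg0]; exact h x)
  obtain ⟨G, hG, -⟩ := exists_extension_norm_eq (LinearMap.range e) g
  refine ⟨(InnerProductSpace.toDual ℂ V).symm G, fun x => ?_⟩
  rw [InnerProductSpace.toDual_symm_apply, ← hg0 x]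
  exact (hG ⟨e x, LinearMap.mem_range_self e x⟩).symm

lemma affine_of_growth {h : ℂ → ℂ} (hd : Differentiable ℂ h) (a b : ℝ) (ha : 0 ≤ a) (hb : 0 ≤ b)
    (hg : ∀ z, ‖h z‖ ≤ a + b * ‖z‖) (z : ℂ) : h z = h 0 + z * (h 1 - h 0) := by
  have hbd : ∀ c, ‖deriv h c‖ ≤ a + 2 * b := by
    intro c
    have hc := norm_nonneg c
    have h1 : ‖deriv h c‖ ≤ (a + b * (2 * ‖c‖ + 1)) / (1 + ‖c‖) := by
      apply Complex.norm_deriv_le_of_forall_mem_sphere_norm_le (by positivity) hd.diffContOnCl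
      intro z hz
      have : ‖z‖ ≤ 2 * ‖c‖ + 1 := by
        have h2 := norm_add_le (z - c) c
        rw [mem_sphere_iff_norm] at hz
        rw [sub_add_cancel, hz] at h2; linarith
      exact (hg z).trans (by gcongr)
    refine h1.trans ?_
    rw [div_le_iff₀ (by positivity)]
    nlinarith [mul_nonneg ha hc, mul_nonneg hb hc]
  have hdd : Differentiable ℂ (deriv h) := hd.deriv
  obtain ⟨c, hc⟩ := hdd.exists_const_forall_eq_of_bounded (by
    rw [isBounded_iff_forall_norm_le]
    exact ⟨_, by rintro _ ⟨c, rfl⟩; exact hbd c⟩)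
  have hconst : ∀ z w, (fun z => h z - z * c) z = (fun z => h z - z * c) w := by
    apply is_const_of_deriv_eq_zero (𝕜 := ℂ)
    · fun_prop
    · intro x
      have := (hd x).hasDerivAt.sub ((hasDerivAt_id x).mul_const c)
      have := this.deriv
      rw [hc, one_mul] at this
      rw [sub_self] at this
      exact this
  have h1 := hconst z 0
  have h2 := hconst 1 0
  simp only [zero_mul, sub_zero, one_mul] at h1 h2
  linear_combination h1 - z * h2

lemma fock_mem (z : ℂ) :
    Memℓp (E := fun _ : ℕ => ℂ) (fun n : ℕ => z ^ n / ((Real.sqrt n.factorial : ℝ) : ℂ)) 2 := by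
  refine memℓp_gen ?_
  refine (Real.summable_pow_div_factorial (‖z‖ ^ 2)).congr fun n => ?_
  have h : (0:ℝ) ≤ (n.factorial : ℝ) := by positivity
  simp only [ENNReal.toReal_ofNat, Real.rpow_ofNat, norm_div, norm_pow, Complex.norm_real,
    Real.norm_eq_abs, div_pow, sq_abs, Real.sq_sqrt h]
  ring

/-- Coherent-state feature map of the one-variable Fock kernel. -/
noncomputable def fockVec (z : ℂ) : lp (fun _ : ℕ => ℂ) 2 := ⟨_, fock_mem z⟩

lemma fockVec_apply (z : ℂ) (n : ℕ) :
    fockVec z n = z ^ n / ((Real.sqrt n.factorial : ℝ) : ℂ) := rfl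

lemma fockVec_inner (z w : ℂ) :
    ⟪fockVec z, fockVec w⟫_ℂ = Complex.exp ((starRingEnd ℂ) z * w) := by
  rw [lp.inner_eq_tsum, ← (exp_series ((starRingEnd ℂ) z * w)).tsum_eq]
  refine tsum_congr fun n => ?_
  have h : (0:ℝ) ≤ (n.factorial : ℝ) := by positivity
  have h2 : ((Real.sqrt n.factorial : ℝ) : ℂ) * ((Real.sqrt n.factorial : ℝ) : ℂ)
      = (n.factorial : ℂ) := by
    rw [← Complex.ofReal_mul, Real.mul_self_sqrt h]; simp
  simp only [fockVec_apply, RCLike.inner_apply, map_div₀, map_pow, Complex.conj_ofReal]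
  rw [div_mul_div_comm, h2]
  push_cast
  rw [mul_pow]
  ring

lemma fockVec_diff (u : lp (fun _ : ℕ => ℂ) 2) :
    Differentiable ℂ (fun z => ⟪u, fockVec z⟫_ℂ) := by
  intro z0
  have hR : 0 ≤ ‖z0‖ + 1 := by positivity
  set R := ‖z0‖ + 1 with hRdef
  have key : DifferentiableOn ℂ
      (fun z => ∑' n : ℕ, ⟪u n, fockVec z n⟫_ℂ) (Metric.ball 0 R) := by
    refine Complex.differentiableOn_tsum_of_summable_norm
      (u := fun n : ℕ => ‖u‖ * ((4 * R ^ 2) ^ n / n.factorial + (1 / 4 : ℝ) ^ n)) ?_ ?_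
      Metric.isOpen_ball ?_
    · exact ((Real.summable_pow_div_factorial (4 * R ^ 2)).add
        (summable_geometric_of_lt_one (by norm_num) (by norm_num))).mul_left _
    · intro n
      simp only [fockVec_apply, RCLike.inner_apply]
      fun_prop
    · intro n z hz
      have hz' : ‖z‖ ≤ R := by simpa using (mem_ball_zero_iff.mp hz).le
      refine (norm_inner_le_norm _ _).trans ?_
      refine mul_le_mul (lp.norm_apply_le_norm (by norm_num) u n) ?_ (norm_nonneg _) (norm_nonneg _)
      have hf : (0:ℝ) < (n.factorial : ℝ) := by positivity
      have hs := Real.sqrt_pos.mpr hf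
      rw [fockVec_apply, norm_div, norm_pow, Complex.norm_real, Real.norm_eq_abs, abs_of_pos hs]
      have h1 : ‖z‖ ^ n ≤ R ^ n := by gcongr
      have e1 : (4 * R ^ 2) ^ n / (n.factorial : ℝ) = ((2 * R) ^ n / Real.sqrt n.factorial) ^ 2 := by
        rw [div_pow, Real.sq_sqrt hf.le, ← pow_mul, mul_comm n 2, pow_mul]; ring
      have e2 : (1 / 4 : ℝ) ^ n = ((1 / 2 : ℝ) ^ n) ^ 2 := by
        rw [← pow_mul, mul_comm n 2, pow_mul]; norm_num
      have e3 : R ^ n / Real.sqrt n.factorial =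
          ((2 * R) ^ n / Real.sqrt n.factorial) * (1 / 2 : ℝ) ^ n := by
        rw [div_mul_eq_mul_div, ← mul_pow]; congr 2; ring
      calc ‖z‖ ^ n / Real.sqrt n.factorial ≤ R ^ n / Real.sqrt n.factorial := by gcongr
        _ ≤ _ := by
          rw [e1, e2, e3]
          have p1 : 0 ≤ (2 * R) ^ n / Real.sqrt n.factorial := by positivity
          have p2 : (0:ℝ) ≤ (1 / 2 : ℝ) ^ n := by positivity
          nlinarith [sq_nonneg ((2 * R) ^ n / Real.sqrt n.factorial - (1 / 2 : ℝ) ^ n),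
            mul_nonneg p1 p2]
  have : (fun z => ⟪u, fockVec z⟫_ℂ) = (fun z => ∑' n : ℕ, ⟪u n, fockVec z n⟫_ℂ) := by
    funext z; rw [lp.inner_eq_tsum]
  rw [this]
  exact key.differentiableAt (Metric.isOpen_ball.mem_nhds (by simp [R]))

section main
variable {E : Type*} [NormedAddCommGroup E] [InnerProductSpace ℂ E]

/-- Feature map for the exponential kernel on the complex line `x + t w`. -/
noncomputable def lineVec (x w : E) (t : ℂ) : lp (fun _ : ℕ => ℂ) 2 :=
  Complex.exp ((‖x‖ : ℂ) ^ 2 / 2 + t * ⟪x, w⟫_ℂ) • fockVec ((‖w‖ : ℂ) * t)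

lemma lineVec_inner (x w : E) (s t : ℂ) :
    ⟪lineVec x w s, lineVec x w t⟫_ℂ = Complex.exp ⟪x + s • w, x + t • w⟫_ℂ := by
  simp only [lineVec, inner_smul_left, inner_smul_right, fockVec_inner, inner_add_left,
    inner_add_right, inner_self_eq_norm_sq_to_K, ← Complex.exp_conj]
  rw [← Complex.exp_add, ← Complex.exp_add]
  congr 1
  simp only [map_add, map_mul, map_div₀, map_pow, Complex.conj_ofReal, inner_conj_symm]
  have : (starRingEnd ℂ) 2 = 2 := Complex.conj_ofNat 2
  rw [this]
  simp only [Complex.coe_algebraMap]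
  ring

lemma lineVec_diff (x w : E) (u : lp (fun _ : ℕ => ℂ) 2) :
    Differentiable ℂ (fun t => ⟪u, lineVec x w t⟫_ℂ) := by
  simp only [lineVec, inner_smul_right]
  have := (fockVec_diff u).comp (g := fun z => ⟪u, fockVec z⟫_ℂ) (f := fun t : ℂ => (‖w‖ : ℂ) * t)
    (by fun_prop)
  exact Differentiable.mul (by fun_prop) this

lemma quad_norm {V ι : Type*} [NormedAddCommGroup V] [InnerProductSpace ℂ V] (s : Finset ι)
    (d : ι → ℂ) (y : ι → V) :
    ∑ i ∈ s, ∑ j ∈ s, (starRingEnd ℂ) (d i) * d j * ⟪y i, y j⟫_ℂ =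
      (‖∑ i ∈ s, d i • y i‖ : ℂ) ^ 2 := by
  rw [← Complex.coe_algebraMap, ← inner_self_eq_norm_sq_to_K, sum_inner]
  refine Finset.sum_congr rfl fun i _ => ?_
  rw [inner_sum]
  refine Finset.sum_congr rfl fun j _ => ?_
  rw [inner_smul_left, inner_smul_right]; ring

/-- Finset form of the hypothesis. -/
lemma psd_finset {X : Type*} {Φ : X → X → ℂ} (h : IsPSDKernel Φ) {ι : Type*} (s : Finset ι)
    (x : ι → X) (d : ι → ℂ) :
    0 ≤ ∑ i ∈ s, ∑ j ∈ s, (starRingEnd ℂ) (d i) * d j * Φ (x j) (x i) := by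
  have h1 := h s.card (fun k => x (s.equivFin.symm k)) (fun k => (starRingEnd ℂ) (d (s.equivFin.symm k)))
  simp only [Complex.conj_conj] at h1
  convert h1 using 1
  rw [← Finset.sum_coe_sort s, ← s.equivFin.symm.sum_comp]
  refine Finset.sum_congr rfl fun i _ => ?_
  rw [← Finset.sum_coe_sort s, ← s.equivFin.symm.sum_comp]

lemma exp_sub_id_psd {ι : Type*} (s : Finset ι) (y : ι → E) (d : ι → ℂ) :
    0 ≤ ∑ i ∈ s, ∑ j ∈ s, (starRingEnd ℂ) (d i) * d j *
      (Complex.exp ⟪y i, y j⟫_ℂ - ⟪y i, y j⟫_ℂ) := by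
  have h := series_psd (Matrix.posSemidef_gram ℂ (fun i : s => y i))
    (fun n => if n = 1 then 0 else (n.factorial : ℝ)⁻¹)
    (fun n => by split_ifs <;> positivity) _
    (fun i j => exp_series_sub _ 1) (fun i : s => d i)
  convert h using 1
  rw [← Finset.sum_coe_sort s]
  refine Finset.sum_congr rfl fun i _ => ?_
  rw [← Finset.sum_coe_sort s]
  refine Finset.sum_congr rfl fun j _ => ?_
  simp [Matrix.gram]

lemma key_bound {φ : E → E} {M : ℝ} (hM : 0 < M) (h : IsPSDKernel (fun z w : E =>
    (M : ℂ) ^ 2 * Complex.exp ⟪w, z⟫_ℂ - Complex.exp ⟪φ w, φ z⟫_ℂ)) (x w : E) (s : Finset ℂ)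
    (d : ℂ → ℂ) :
    ‖∑ t ∈ s, d t • φ (x + t • w)‖ ≤ M * ‖∑ t ∈ s, d t • lineVec x w t‖ := by
  have h1 := psd_finset h s (fun t : ℂ => x + t • w) d
  have h2 := exp_sub_id_psd s (fun t : ℂ => φ (x + t • w)) d
  have h3 := add_nonneg h1 h2
  have e : (∑ i ∈ s, ∑ j ∈ s, (starRingEnd ℂ) (d i) * d j *
        ((M : ℂ) ^ 2 * Complex.exp ⟪x + i • w, x + j • w⟫_ℂ -
          Complex.exp ⟪φ (x + i • w), φ (x + j • w)⟫_ℂ)) +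
      (∑ i ∈ s, ∑ j ∈ s, (starRingEnd ℂ) (d i) * d j *
        (Complex.exp ⟪φ (x + i • w), φ (x + j • w)⟫_ℂ - ⟪φ (x + i • w), φ (x + j • w)⟫_ℂ)) =
      (M : ℂ) ^ 2 * (‖∑ t ∈ s, d t • lineVec x w t‖ : ℂ) ^ 2 -
        (‖∑ t ∈ s, d t • φ (x + t • w)‖ : ℂ) ^ 2 := by
    rw [← quad_norm, ← quad_norm, Finset.mul_sum, ← Finset.sum_add_distrib,
      ← Finset.sum_sub_distrib]
    refine Finset.sum_congr rfl fun i _ => ?_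
    rw [Finset.mul_sum, ← Finset.sum_add_distrib, ← Finset.sum_sub_distrib]
    refine Finset.sum_congr rfl fun j _ => ?_
    rw [lineVec_inner]; ring
  rw [e] at h3
  norm_cast at h3
  have h4 : ‖∑ t ∈ s, d t • φ (x + t • w)‖ ^ 2 ≤ (M * ‖∑ t ∈ s, d t • lineVec x w t‖) ^ 2 := by
    rw [mul_pow]; linarith
  exact le_of_sq_le_sq h4 (by positivity)

lemma diag_bound {φ : E → E} {M : ℝ} (hM : 0 < M) (h : IsPSDKernel (fun z w : E =>
    (M : ℂ) ^ 2 * Complex.exp ⟪w, z⟫_ℂ - Complex.exp ⟪φ w, φ z⟫_ℂ)) (x : E) :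
    ‖φ x‖ ^ 2 ≤ ‖x‖ ^ 2 + 2 * Real.log M := by
  have h1 := psd_finset h ({()} : Finset Unit) (fun _ => x) (fun _ => 1)
  simp only [Finset.sum_singleton, map_one, one_mul, inner_self_eq_norm_sq_to_K,
    Complex.coe_algebraMap] at h1
  norm_cast at h1
  rw [sub_nonneg, ← Real.log_le_log_iff (by positivity) (by positivity), Real.log_exp,
    Real.log_mul (by positivity) (by positivity), Real.log_exp, Real.log_pow] at h1
  push_cast at h1
  linarith

lemma phi_line {φ : E → E} {M : ℝ} (hM : 0 < M) (h : IsPSDKernel (fun z w : E =>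
    (M : ℂ) ^ 2 * Complex.exp ⟪w, z⟫_ℂ - Complex.exp ⟪φ w, φ z⟫_ℂ)) (x w : E) (t : ℂ) :
    φ (x + t • w) = φ x + t • (φ (x + w) - φ x) := by
  refine ext_inner_left ℂ fun v => ?_
  obtain ⟨u, hu⟩ := riesz_ext (Finsupp.linearCombination ℂ (lineVec x w))
    (Finsupp.linearCombination ℂ (fun t : ℂ => ⟪v, φ (x + t • w)⟫_ℂ)) (‖v‖ * M) (by
      intro d
      rw [Finsupp.linearCombination_apply, Finsupp.linearCombination_apply, Finsupp.sum,
        Finsupp.sum]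
      have e : ∑ t ∈ d.support, d t • ⟪v, φ (x + t • w)⟫_ℂ =
          ⟪v, ∑ t ∈ d.support, d t • φ (x + t • w)⟫_ℂ := by
        rw [inner_sum]; simp [inner_smul_right]
      rw [e, mul_assoc]
      refine (norm_inner_le_norm _ _).trans ?_
      gcongr
      exact key_bound hM h x w _ _)
  have hu' : ∀ t : ℂ, ⟪v, φ (x + t • w)⟫_ℂ = ⟪u, lineVec x w t⟫_ℂ := by
    intro t
    simpa using hu (Finsupp.single t 1)
  have hd : Differentiable ℂ (fun t : ℂ => ⟪v, φ (x + t • w)⟫_ℂ) := by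
    simp only [hu']; exact lineVec_diff x w u
  have hgr : ∀ y, ‖φ y‖ ≤ ‖y‖ + (1 + |2 * Real.log M|) := by
    intro y
    have h1 := diag_bound hM h y
    have h2 := le_abs_self (2 * Real.log M)
    have h3 := abs_nonneg (2 * Real.log M)
    refine le_of_sq_le_sq ?_ (by positivity)
    nlinarith [norm_nonneg y, mul_nonneg (norm_nonneg y) h3]
  have := affine_of_growth hd (‖v‖ * (‖x‖ + (1 + |2 * Real.log M|))) (‖v‖ * ‖w‖) (by positivity)
    (by positivity) (by
      intro z
      refine (norm_inner_le_norm _ _).trans ?_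
      have h1 := hgr (x + z • w)
      have h2 := norm_add_le x (z • w)
      rw [norm_smul] at h2
      have : ‖φ (x + z • w)‖ ≤ ‖x‖ + (1 + |2 * Real.log M|) + ‖w‖ * ‖z‖ := by linarith
      calc _ ≤ ‖v‖ * (‖x‖ + (1 + |2 * Real.log M|) + ‖w‖ * ‖z‖) := by gcongr
        _ = _ := by ring) t
  simp only [zero_smul, add_zero, one_smul] at this
  rw [this, inner_add_right, inner_smul_right, inner_sub_right]
end main

section main2
variable {E : Type*} [NormedAddCommGroup E] [InnerProductSpace ℂ E] [CompleteSpace E]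

lemma exists_affine {φ : E → E} {C : ℝ} (hl : ∀ (x w : E) (t : ℂ),
    φ (x + t • w) = φ x + t • (φ (x + w) - φ x))
    (hC : ∀ x, ‖φ x‖ ^ 2 ≤ ‖x‖ ^ 2 + C) :
    ∃ A : E →L[ℂ] E, ‖A‖ ≤ 1 ∧ ∀ z, φ z = A z + φ 0 := by
  have hsm : ∀ (t : ℂ) (w : E), φ (t • w) - φ 0 = t • (φ w - φ 0) := by
    intro t w
    have := hl 0 w t
    simp only [zero_add] at this
    rw [this]; abel
  have hadd : ∀ x y : E, φ (x + y) - φ 0 = (φ x - φ 0) + (φ y - φ 0) := by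
    intro x y
    have h1 := hl ((2:ℂ) • x) ((2:ℂ) • y - (2:ℂ) • x) (1 / 2)
    have e1 : (2:ℂ) • x + (1 / 2 : ℂ) • ((2:ℂ) • y - (2:ℂ) • x) = x + y := by module
    have e2 : (2:ℂ) • x + ((2:ℂ) • y - (2:ℂ) • x) = (2:ℂ) • y := by module
    rw [e1, e2] at h1
    have h2 := hsm 2 x
    have h3 := hsm 2 y
    rw [sub_eq_iff_eq_add] at h2 h3
    rw [h1, h2, h3]; module
  let A0 : E →ₗ[ℂ] E :=
    { toFun := fun z => φ z - φ 0
      map_add' := hadd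
      map_smul' := hsm }
  have hb : ∀ z, ‖A0 z‖ ≤ 1 * ‖z‖ := by
    intro z
    rw [one_mul]
    refine le_of_forall_pos_le_add fun ε hε => ?_
    -- `n‖A z‖ ≤ ‖φ (n z)‖ + ‖φ 0‖ ≤ n‖z‖ + D`
    set D := 1 + |C| + ‖φ 0‖ with hD
    have hD0 : 0 < D := by positivity
    have hgr : ∀ y, ‖φ y‖ ≤ ‖y‖ + (1 + |C|) := by
      intro y
      have h1 := hC y
      have h2 := le_abs_self C
      have h3 := abs_nonneg C
      refine le_of_sq_le_sq ?_ (by positivity)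
      nlinarith [norm_nonneg y, mul_nonneg (norm_nonneg y) h3]
    have hn : 0 < D / ε := by positivity
    have h1 : A0 (((D / ε : ℝ) : ℂ) • z) = ((D / ε : ℝ) : ℂ) • A0 z := map_smul _ _ _
    have h2 : ‖A0 (((D / ε : ℝ) : ℂ) • z)‖ ≤ ‖φ (((D / ε : ℝ) : ℂ) • z)‖ + ‖φ 0‖ := norm_sub_le _ _
    have h3 := hgr (((D / ε : ℝ) : ℂ) • z)
    rw [h1, norm_smul, Complex.norm_real, Real.norm_eq_abs, abs_of_pos hn] at h2
    rw [norm_smul, Complex.norm_real, Real.norm_eq_abs, abs_of_pos hn] at h3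
    have h4 : D / ε * ‖A0 z‖ ≤ D / ε * (‖z‖ + ε) := by
      have : D / ε * ε = D := by field_simp
      rw [mul_add, this]; linarith
    exact le_of_mul_le_mul_left h4 hn
  refine ⟨A0.mkContinuous 1 hb, LinearMap.mkContinuous_norm_le _ zero_le_one _, fun z => ?_⟩
  simp [A0]

lemma exists_sqrt (A : E →L[ℂ] E) (hA : ‖A‖ ≤ 1) :
    ∃ S : E →L[ℂ] E, IsPosSqrtOf S (1 - (adjoint A) ∘L A) := by
  have hpos : (0 : E →L[ℂ] E) ≤ 1 - (adjoint A) ∘L A := by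
    rw [ContinuousLinearMap.nonneg_iff_isPositive, ContinuousLinearMap.isPositive_iff_complex]
    intro x
    have h : ⟪(1 - (adjoint A) ∘L A) x, x⟫_ℂ = ((‖x‖ ^ 2 - ‖A x‖ ^ 2 : ℝ) : ℂ) := by
      simp [inner_sub_left, adjoint_inner_left, inner_self_eq_norm_sq_to_K]
    rw [h]
    refine ⟨by rw [RCLike.re_to_complex, Complex.ofReal_re], ?_⟩
    have h1 : ‖A x‖ ≤ ‖x‖ := by simpa using A.le_of_opNorm_le hA x
    have : ‖A x‖ ^ 2 ≤ ‖x‖ ^ 2 := by gcongr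
    rw [RCLike.re_to_complex, Complex.ofReal_re]
    linarith
  refine ⟨CFC.sqrt (1 - (adjoint A) ∘L A), ⟨?_, ?_⟩, CFC.sqrt_mul_sqrt_self _ hpos⟩
  · have := (ContinuousLinearMap.nonneg_iff_isPositive _).mp
      (CFC.sqrt_nonneg (1 - (adjoint A) ∘L A))
    exact fun x y => this.isSymmetric x y
  · have := (ContinuousLinearMap.nonneg_iff_isPositive _).mp
      (CFC.sqrt_nonneg (1 - (adjoint A) ∘L A))
    exact fun x => this.inner_nonneg_left x

lemma sqrt_inner {A S : E →L[ℂ] E} (hS : IsPosSqrtOf S (1 - (adjoint A) ∘L A)) (z w : E) :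
    ⟪z, w⟫_ℂ = ⟪A z, A w⟫_ℂ + ⟪S z, S w⟫_ℂ := by
  have h : S (S w) = w - adjoint A (A w) := by
    have := congrArg (fun T : E →L[ℂ] E => T w) hS.2
    simpa using this
  rw [hS.1.1, h, inner_sub_right, adjoint_inner_right]; ring

lemma range_of_bound {A S : E →L[ℂ] E} {b : E} (hS : IsPosSqrtOf S (1 - (adjoint A) ∘L A)) {C : ℝ}
    (hC : ∀ x, ‖A x + b‖ ^ 2 ≤ ‖x‖ ^ 2 + C) : adjoint A b ∈ Set.range ⇑S := by
  have hn : ∀ x, ‖x‖ ^ 2 = ‖A x‖ ^ 2 + ‖S x‖ ^ 2 := by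
    intro x
    have := sqrt_inner hS x x
    simp only [inner_self_eq_norm_sq_to_K, Complex.coe_algebraMap] at this
    exact_mod_cast this
  have h1 : ∀ x, 2 * (⟪A x, b⟫_ℂ).re ≤ ‖S x‖ ^ 2 + C := by
    intro x
    have h := hC x
    rw [@norm_add_sq ℂ, hn x] at h
    simp only [RCLike.re_to_complex] at h
    nlinarith [sq_nonneg ‖b‖]
  have hC0 : 0 ≤ C := by simpa using h1 0
  have h2 : ∀ x, 2 * ‖⟪A x, b⟫_ℂ‖ ≤ ‖S x‖ ^ 2 + C := by
    intro x
    obtain ⟨c, hc, hc'⟩ : ∃ c : ℂ, ‖c‖ = 1 ∧ (starRingEnd ℂ) c * ⟪A x, b⟫_ℂ = (‖⟪A x, b⟫_ℂ‖ : ℂ) := by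
      obtain ⟨c, hc, hc'⟩ := RCLike.exists_norm_eq_mul_self (K := ℂ) ⟪A x, b⟫_ℂ
      exact ⟨(starRingEnd ℂ) c, by simpa using hc, by simpa using hc'.symm⟩
    have := h1 (c • x)
    rw [map_smul, map_smul, inner_smul_left, hc', norm_smul, hc, one_mul] at this
    simpa using this
  have h3 : ∀ x, ‖⟪A x, b⟫_ℂ‖ ≤ (C + 1) * ‖S x‖ := by
    intro x
    -- scale by a positive real
    have hsc : ∀ t : ℝ, 0 < t → 2 * t * ‖⟪A x, b⟫_ℂ‖ ≤ t ^ 2 * ‖S x‖ ^ 2 + C := by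
      intro t ht
      have := h2 ((t : ℂ) • x)
      rw [map_smul, map_smul, inner_smul_left, norm_mul, norm_smul] at this
      simp only [Complex.conj_ofReal, Complex.norm_real, Real.norm_eq_abs, abs_of_pos ht] at this
      nlinarith
    rcases (norm_nonneg (S x)).eq_or_lt with h0 | h0
    · rw [← h0] at hsc ⊢
      rw [mul_zero]
      by_contra hcon
      push Not at hcon
      have := hsc ((C + 1) / ‖⟪A x, b⟫_ℂ‖) (by positivity)
      have e : 2 * ((C + 1) / ‖⟪A x, b⟫_ℂ‖) * ‖⟪A x, b⟫_ℂ‖ = 2 * (C + 1) := by field_simp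
      rw [e] at this
      nlinarith
    · have := hsc (1 / ‖S x‖) (by positivity)
      have e : (1 / ‖S x‖) ^ 2 * ‖S x‖ ^ 2 = 1 := by field_simp
      have e2 : 2 * (1 / ‖S x‖) * ‖⟪A x, b⟫_ℂ‖ = 2 * ‖⟪A x, b⟫_ℂ‖ / ‖S x‖ := by ring
      rw [e, e2, div_le_iff₀ h0] at this
      nlinarith
  obtain ⟨u, hu⟩ := riesz_ext S.toLinearMap ((innerSL ℂ (adjoint A b)).toLinearMap) (C + 1) (by
    intro x
    have := h3 x
    simp only [ContinuousLinearMap.coe_coe, innerSL_apply_apply, adjoint_inner_left]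
    rwa [norm_inner_symm])
  refine ⟨u, ext_inner_right ℂ fun x => ?_⟩
  rw [hS.1.1]
  exact (hu x).symm

lemma exp_sub_one_psd {ι : Type*} [Fintype ι] (G : Matrix ι ι ℂ) (hG : G.PosSemidef) :
    (Matrix.of fun i j => Complex.exp (G i j) - 1).PosSemidef := by
  rw [Matrix.posSemidef_iff_dotProduct_mulVec]
  constructor
  · ext i j
    have := hG.1.apply i j
    simp only [RCLike.star_def] at this
    simp [← Complex.exp_conj, this]
  · intro d
    rw [quad_eq]
    have h := series_psd hG (fun n => if n = 0 then 0 else (n.factorial : ℝ)⁻¹)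
      (fun n => by split_ifs <;> positivity) _ (fun i j => exp_series_sub _ 0) d
    simpa using h

lemma exp_psd {ι : Type*} [Fintype ι] (G : Matrix ι ι ℂ) (hG : G.PosSemidef) :
    (Matrix.of fun i j => Complex.exp (G i j)).PosSemidef := by
  have h1 := (exp_sub_one_psd G hG).add (pow_psd hG 0)
  convert h1 using 1
  ext i j; simp

lemma backward {A S : E →L[ℂ] E} {b u : E} (hS : IsPosSqrtOf S (1 - (adjoint A) ∘L A))
    (hu : S u = adjoint A b) {φ : E → E} (hφ : ∀ z, φ z = A z + b) :
    IsPSDKernel (fun z w : E => ((Real.exp ((‖b‖ ^ 2 + ‖u‖ ^ 2) / 2) : ℝ) : ℂ) ^ 2 *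
      Complex.exp ⟪w, z⟫_ℂ - Complex.exp ⟪φ w, φ z⟫_ℂ) := by
  intro m x c
  have hP := (exp_psd _ (Matrix.posSemidef_gram ℂ (fun i => A (x i)))).hadamard
    (exp_sub_one_psd _ (Matrix.posSemidef_gram ℂ (fun i => S (x i) - u)))
  have h := hP.dotProduct_mulVec_nonneg
    (fun i => (starRingEnd ℂ) (c i) * Complex.exp (‖b‖ ^ 2 / 2 + ⟪u, S (x i)⟫_ℂ))
  refine le_of_le_of_eq h ?_
  refine (quad_eq _ _).trans ?_
  refine Finset.sum_congr rfl fun j _ => Finset.sum_congr rfl fun l _ => ?_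
  simp only [Matrix.hadamard_apply, Matrix.of_apply, Matrix.gram_apply, map_mul, Complex.conj_conj,
    ← Complex.exp_conj, map_add, inner_conj_symm, map_div₀, map_pow, Complex.conj_ofReal,
    Complex.conj_ofNat]
  have e1 := sqrt_inner hS (x j) (x l)
  have e2 : ⟪φ (x j), φ (x l)⟫_ℂ = ⟪A (x j), A (x l)⟫_ℂ + ⟪S (x j), u⟫_ℂ + ⟪u, S (x l)⟫_ℂ
      + (‖b‖ : ℂ) ^ 2 := by
    rw [hφ, hφ, inner_add_left, inner_add_right, inner_add_right, ← adjoint_inner_right A (x j) b,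
      ← adjoint_inner_left A (x l) b, ← hu, hS.1.1 u, hS.1.1 (x j) u, inner_self_eq_norm_sq_to_K]
    simp only [Complex.coe_algebraMap]
    ring
  have e3 : ⟪S (x j) - u, S (x l) - u⟫_ℂ = ⟪S (x j), S (x l)⟫_ℂ - ⟪S (x j), u⟫_ℂ - ⟪u, S (x l)⟫_ℂ
      + (‖u‖ : ℂ) ^ 2 := by
    rw [inner_sub_left, inner_sub_right, inner_sub_right, inner_self_eq_norm_sq_to_K]
    simp only [Complex.coe_algebraMap]
    ring
  have e4 : ((Real.exp ((‖b‖ ^ 2 + ‖u‖ ^ 2) / 2) : ℝ) : ℂ) ^ 2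
      = Complex.exp ((‖b‖ : ℂ) ^ 2 + (‖u‖ : ℂ) ^ 2) := by
    rw [← Complex.ofReal_pow, ← Real.exp_nat_mul]
    push_cast
    congr 1; ring
  rw [e1, e2, e3, e4]
  have f1 : Complex.exp ((‖b‖ : ℂ) ^ 2 + (‖u‖ : ℂ) ^ 2) *
      Complex.exp (⟪A (x j), A (x l)⟫_ℂ + ⟪S (x j), S (x l)⟫_ℂ) =
      Complex.exp ((‖b‖ : ℂ) ^ 2 / 2 + ⟪S (x j), u⟫_ℂ) *
      Complex.exp ((‖b‖ : ℂ) ^ 2 / 2 + ⟪u, S (x l)⟫_ℂ) * (Complex.exp ⟪A (x j), A (x l)⟫_ℂ *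
      Complex.exp (⟪S (x j), S (x l)⟫_ℂ - ⟪S (x j), u⟫_ℂ - ⟪u, S (x l)⟫_ℂ
      + (‖u‖ : ℂ) ^ 2)) := by
    simp only [← Complex.exp_add]; congr 1; ring
  have f2 : Complex.exp (⟪A (x j), A (x l)⟫_ℂ + ⟪S (x j), u⟫_ℂ + ⟪u, S (x l)⟫_ℂ
      + (‖b‖ : ℂ) ^ 2) = Complex.exp ((‖b‖ : ℂ) ^ 2 / 2 + ⟪S (x j), u⟫_ℂ) *
      Complex.exp ((‖b‖ : ℂ) ^ 2 / 2 + ⟪u, S (x l)⟫_ℂ) * Complex.exp ⟪A (x j), A (x l)⟫_ℂ := by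
    simp only [← Complex.exp_add]; congr 1; ring
  rw [f1, f2]
  ring
end main2

/-- For `φ : E → E`, there is `M > 0` making
`Φ_M(z,w) = M² exp⟨z,w⟩ − exp⟨φ z, φ w⟩` a positive semi-definite kernel (i.e. `C_φ` is bounded
on the Segal–Bargmann space with norm at most `M`) iff `φ z = A z + b` with `‖A‖ ≤ 1` and
`A* b` in the range of `(I − A*A)^{1/2}`.  (The paper's inner product `⟨z,w⟩`, linear in the
first slot, is `⟪w, z⟫_ℂ` in Mathlib's convention.) -/
theorem statement0 {E : Type*} [NormedAddCommGroup E] [InnerProductSpace ℂ E]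
    [CompleteSpace E] (φ : E → E) :
    (∃ M : ℝ, 0 < M ∧ IsPSDKernel (fun z w : E =>
        (M : ℂ) ^ 2 * Complex.exp ⟪w, z⟫_ℂ - Complex.exp ⟪φ w, φ z⟫_ℂ)) ↔
    ∃ (A : E →L[ℂ] E) (b : E), ‖A‖ ≤ 1 ∧ (∀ z : E, φ z = A z + b) ∧
      ∃ S : E →L[ℂ] E, IsPosSqrtOf S (1 - (adjoint A) ∘L A) ∧
        adjoint A b ∈ Set.range ⇑S := by
  constructor
  · rintro ⟨M, hM, h⟩
    obtain ⟨A, hA, hφ⟩ := exists_affine (phi_line hM h) (diag_bound hM h)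
    obtain ⟨S, hS⟩ := exists_sqrt A hA
    refine ⟨A, φ 0, hA, hφ, S, hS, range_of_bound hS (C := 2 * Real.log M) fun x => ?_⟩
    rw [← hφ]
    exact diag_bound hM h x
  · rintro ⟨A, b, -, hφ, S, hS, u, hu⟩
    exact ⟨_, Real.exp_pos _, backward hS hu hφ⟩
end

section
/- Let E be a complex Hilbert space, A a bounded linear operator on E with ‖A‖ ≤ 1, and b ∈ E. Suppose v ∈ E satisfies (I − A*A)^{1/2} v = A*b and v lies in the closure of the range of (I − A*A)^{1/2} (so v is the minimal-norm solution). Define φ(z) = Az + b. Then M₀ = exp(½‖v‖² + ½‖b‖²) is the least M > 0 for which the kernel Φ_M(z,w) = M²·exp(⟨z,w⟩) − exp(⟨φ(z),φ(w)⟩) is positive semi-definite on E; that is, Φ_{M₀} is positive semi-definite, and every M > 0 for which Φ_M is positive semi-definite satisfies M ≥ M₀. (Equivalently, the norm of the composition operator C_φ on the Segal–Bargmann space over E equals exp(½‖v‖² + ½‖b‖²).) -/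
open scoped InnerProductSpace ComplexOrder
open ContinuousLinearMap

theorem psd_of_hasSum {n : ℕ} {P : ℕ → Matrix (Fin n) (Fin n) ℂ} {L : Matrix (Fin n) (Fin n) ℂ}
    (hP : ∀ k, (P k).PosSemidef) (hL : ∀ i j, HasSum (fun k => P k i j) (L i j)) :
    L.PosSemidef := by
  refine .of_dotProduct_mulVec_nonneg ?_ fun x => ?_
  · ext i j
    rw [Matrix.conjTranspose_apply]
    have h := (hL j i).star
    refine h.unique ?_
    convert hL i j using 2 with k
    exact (hP k).1.apply i j
  · have h : HasSum (fun k => star x ⬝ᵥ (Matrix.mulVec (P k) x)) (star x ⬝ᵥ (Matrix.mulVec L x)) := by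
      simp only [dotProduct, Matrix.mulVec]
      refine hasSum_sum fun i _ => HasSum.mul_left _ (hasSum_sum fun j _ => (hL i j).mul_right _)
    exact h.nonneg fun k => (hP k).dotProduct_mulVec_nonneg x

theorem psd_ones (n : ℕ) : (Matrix.of fun _ _ : Fin n => (1 : ℂ)).PosSemidef := by
  have h := Matrix.posSemidef_gram (𝕜 := ℂ) (fun _ : Fin n => (1 : ℂ))
  have e : (Matrix.of fun _ _ : Fin n => (1 : ℂ)) = Matrix.gram ℂ (fun _ : Fin n => (1 : ℂ)) := by
    ext i j
    simp [Matrix.gram]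
  rw [e]
  exact h

theorem psd_pow {n : ℕ} {G : Matrix (Fin n) (Fin n) ℂ} (hG : G.PosSemidef) (k : ℕ) :
    (Matrix.of fun i j => G i j ^ k).PosSemidef := by
  induction k with
  | zero => simpa using psd_ones n
  | succ k ih =>
    have e : (Matrix.of fun i j => G i j ^ (k + 1)) =
        (Matrix.of fun i j => G i j ^ k).hadamard G := by
      ext i j
      simp [Matrix.hadamard, pow_succ]
    rw [e]
    exact ih.hadamard hG

theorem psd_exp_sub_one {n : ℕ} {G : Matrix (Fin n) (Fin n) ℂ} (hG : G.PosSemidef) :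
    (Matrix.of fun i j => Complex.exp (G i j) - 1).PosSemidef := by
  refine psd_of_hasSum
    (P := fun k => ((1 / ((k + 1).factorial : ℝ) : ℝ) : ℂ) • Matrix.of fun i j => G i j ^ (k + 1))
    (fun k => (psd_pow hG (k + 1)).smul ?_) fun i j => ?_
  · exact_mod_cast (by positivity : (0 : ℝ) ≤ 1 / ((k + 1).factorial : ℝ))
  · have h := NormedSpace.expSeries_div_hasSum_exp (G i j)
    rw [← Complex.exp_eq_exp_ℂ] at h
    have h2 := (hasSum_nat_add_iff' 1).2 h
    simpa [div_eq_inv_mul] using h2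

theorem psd_exp {n : ℕ} {G : Matrix (Fin n) (Fin n) ℂ} (hG : G.PosSemidef) :
    (Matrix.of fun i j => Complex.exp (G i j)).PosSemidef := by
  convert (psd_exp_sub_one hG).add (psd_ones n) using 1
  ext i j
  simp

theorem key_identity {E : Type*} [NormedAddCommGroup E] [InnerProductSpace ℂ E]
    [CompleteSpace E] (A : E →L[ℂ] E) (b v : E)
    (S : E →L[ℂ] E) (hS : IsPosSqrtOf S (1 - (adjoint A) ∘L A))
    (hv : S v = adjoint A b) (w z : E) :
    ⟪A w + b, A z + b⟫_ℂ + ⟪S w - v, S z - v⟫_ℂ =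
      ⟪w, z⟫_ℂ + ((‖v‖ ^ 2 + ‖b‖ ^ 2 : ℝ) : ℂ) := by
  obtain ⟨⟨hsa, -⟩, hsq⟩ := hS
  have h1 : ⟪S w, S z⟫_ℂ = ⟪w, z⟫_ℂ - ⟪A w, A z⟫_ℂ := by
    rw [hsa, ← ContinuousLinearMap.comp_apply, hsq]
    simp [inner_sub_right, adjoint_inner_right]
  have h2 : ⟪S w, v⟫_ℂ = ⟪A w, b⟫_ℂ := by rw [hsa, hv, adjoint_inner_right]
  have h3 : ⟪v, S z⟫_ℂ = ⟪b, A z⟫_ℂ := by rw [← hsa, hv, adjoint_inner_left]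
  simp only [inner_add_left, inner_add_right, inner_sub_left, inner_sub_right, h1, h2, h3]
  rw [inner_self_eq_norm_sq_to_K, inner_self_eq_norm_sq_to_K]
  push_cast
  simp only [Complex.coe_algebraMap]
  ring

/-- with `φ z = A z + b`, `‖A‖ ≤ 1`, `S = (I − A*A)^{1/2}`, and `v` the
minimal-norm solution of `S v = A* b` (i.e. `v` in the closure of the range of `S`),
`M₀ = exp(½‖v‖² + ½‖b‖²)` is the least `M > 0` for which
`Φ_M(z,w) = M² exp⟨z,w⟩ − exp⟨φ z, φ w⟩` is positive semi-definite; equivalently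
`‖C_φ‖ = exp(½‖v‖² + ½‖b‖²)`. -/
theorem statement1 {E : Type*} [NormedAddCommGroup E] [InnerProductSpace ℂ E]
    [CompleteSpace E] (A : E →L[ℂ] E) (hA : ‖A‖ ≤ 1) (b v : E)
    (S : E →L[ℂ] E) (hS : IsPosSqrtOf S (1 - (adjoint A) ∘L A))
    (hv : S v = adjoint A b) (hv' : v ∈ closure (Set.range ⇑S)) :
    IsPSDKernel (fun z w : E =>
        (Real.exp (‖v‖ ^ 2 / 2 + ‖b‖ ^ 2 / 2) : ℂ) ^ 2 * Complex.exp ⟪w, z⟫_ℂ -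
          Complex.exp ⟪A w + b, A z + b⟫_ℂ) ∧
    ∀ M : ℝ, 0 < M →
      IsPSDKernel (fun z w : E =>
        (M : ℂ) ^ 2 * Complex.exp ⟪w, z⟫_ℂ - Complex.exp ⟪A w + b, A z + b⟫_ℂ) →
      Real.exp (‖v‖ ^ 2 / 2 + ‖b‖ ^ 2 / 2) ≤ M := by
  have key := key_identity A b v S hS hv
  constructor
  · intro m x c
    have hG := (psd_exp (Matrix.posSemidef_gram (𝕜 := ℂ) (fun i => A (x i) + b))).hadamard
      (psd_exp_sub_one (Matrix.posSemidef_gram (𝕜 := ℂ) (fun i => S (x i) - v)))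
    have h := hG.dotProduct_mulVec_nonneg (star c)
    refine h.trans_eq ?_
    simp only [dotProduct, Matrix.mulVec, Finset.mul_sum]
    refine Finset.sum_congr rfl fun j _ => Finset.sum_congr rfl fun l _ => ?_
    have e : (Real.exp (‖v‖ ^ 2 / 2 + ‖b‖ ^ 2 / 2) : ℂ) ^ 2 * Complex.exp ⟪x j, x l⟫_ℂ =
        Complex.exp ⟪A (x j) + b, A (x l) + b⟫_ℂ * Complex.exp ⟪S (x j) - v, S (x l) - v⟫_ℂ := by
      rw [← Complex.exp_add, key, Complex.ofReal_exp, ← Complex.exp_nat_mul, ← Complex.exp_add]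
      congr 1
      push_cast
      ring
    rw [e]
    simp only [Matrix.hadamard, Matrix.gram, Matrix.of_apply, star_star, Pi.star_apply,
      starRingEnd_apply]
    ring
  · intro M hM h
    have h1 : ∀ z : E, Real.exp (‖v‖ ^ 2 + ‖b‖ ^ 2 - ‖S z - v‖ ^ 2) ≤ M ^ 2 := by
      intro z
      have h2 := h 1 (fun _ => z) (fun _ => 1)
      have e : ⟪A z + b, A z + b⟫_ℂ =
          ⟪z, z⟫_ℂ + ((‖v‖ ^ 2 + ‖b‖ ^ 2 - ‖S z - v‖ ^ 2 : ℝ) : ℂ) := by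
        have := key z z
        rw [inner_self_eq_norm_sq_to_K (𝕜 := ℂ) (S z - v)] at this
        push_cast at this ⊢
        simp only [Complex.coe_algebraMap] at this
        linear_combination this
      simp only [Finset.univ_unique, Finset.sum_singleton, map_one, one_mul, e, Complex.exp_add]
        at h2
      rw [inner_self_eq_norm_sq_to_K (𝕜 := ℂ) z] at h2
      simp only [Complex.coe_algebraMap] at h2
      have h3 : 0 ≤ M ^ 2 * Real.exp (‖z‖ ^ 2) -
          Real.exp (‖z‖ ^ 2) * Real.exp (‖v‖ ^ 2 + ‖b‖ ^ 2 - ‖S z - v‖ ^ 2) := by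
        exact_mod_cast h2
      have := Real.exp_pos (‖z‖ ^ 2)
      nlinarith
    have h4 : Real.exp (‖v‖ ^ 2 + ‖b‖ ^ 2 - ‖v - v‖ ^ 2) ≤ M ^ 2 := by
      have hc : IsClosed {y : E | Real.exp (‖v‖ ^ 2 + ‖b‖ ^ 2 - ‖y - v‖ ^ 2) ≤ M ^ 2} :=
        isClosed_le (by fun_prop) continuous_const
      exact closure_minimal (by rintro _ ⟨z, rfl⟩; exact h1 z) hc hv'
    refine (fun h5 => (pow_le_pow_iff_left₀ (Real.exp_pos _).le hM.le two_ne_zero).1 h5) ?_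
    rw [← Real.exp_nat_mul]
    refine le_trans (le_of_eq ?_) h4
    congr 1
    simp
    ring
end

section
/- Let E be a complex Hilbert space, A a bounded linear operator on E with ‖A‖ ≤ 1, and b, v ∈ E such that A*b = (I − A*A)^{1/2} v. Then the kernel (z,w) ↦ exp(‖b‖² + ‖v‖²)·exp(⟨z,w⟩) − exp(⟨Az + b, Aw + b⟩) is a positive semi-definite kernel on E. -/
open scoped InnerProductSpace ComplexOrder
open ContinuousLinearMap

theorem aux_pow {m : ℕ} {M : Matrix (Fin m) (Fin m) ℂ} (hM : M.PosSemidef) (n : ℕ) :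
    (Matrix.of fun i j => M i j ^ n / (n.factorial : ℂ)).PosSemidef := by
  induction n with
  | zero =>
    have h := Matrix.posSemidef_vecMulVec_self_star (fun _ : Fin m => (1 : ℂ))
    convert h using 1
    ext i j
    simp [Matrix.vecMulVec_apply]
  | succ n ih =>
    have h0 : (0 : ℝ) ≤ 1 / ((n + 1 : ℕ) : ℝ) := by positivity
    have h1 : (0 : ℂ) ≤ (((1 / ((n + 1 : ℕ) : ℝ)) : ℝ) : ℂ) := by exact_mod_cast h0
    have h := (ih.hadamard hM).smul h1
    suffices he : (Matrix.of fun i j => M i j ^ (n + 1) / ((n + 1).factorial : ℂ)) =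
        (((1 / ((n + 1 : ℕ) : ℝ)) : ℝ) : ℂ) •
          ((Matrix.of fun i j => M i j ^ n / (n.factorial : ℂ)).hadamard M) by
      rw [he]; exact h
    ext i j
    have : ((n : ℂ) + 1) ≠ 0 := by exact_mod_cast Nat.succ_ne_zero n
    have h3 : (n.factorial : ℂ) ≠ 0 := by exact_mod_cast n.factorial_ne_zero
    simp [Nat.factorial_succ, pow_succ]
    field_simp

theorem aux_main {m : ℕ} {M K : Matrix (Fin m) (Fin m) ℂ} (hM : M.PosSemidef)
    (hK : K.PosSemidef) (c : Fin m → ℂ) :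
    0 ≤ ∑ j, ∑ l, c j * (starRingEnd ℂ) (c l) *
      (Complex.exp (M j l) * (Complex.exp (K j l) - 1)) := by
  have hexp : ∀ z : ℂ, Filter.Tendsto
      (fun N : ℕ => ∑ n ∈ Finset.range N, z ^ n / (n.factorial : ℂ)) Filter.atTop
      (nhds (Complex.exp z)) := by
    intro z
    have := (NormedSpace.expSeries_div_hasSum_exp (𝔸 := ℂ) z).tendsto_sum_nat
    rwa [← Complex.exp_eq_exp_ℂ] at this
  have hexp' : ∀ z : ℂ, Filter.Tendsto
      (fun N : ℕ => ∑ n ∈ Finset.range N, z ^ (n + 1) / ((n + 1).factorial : ℂ)) Filter.atTop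
      (nhds (Complex.exp z - 1)) := by
    intro z
    have h := ((hexp z).comp (Filter.tendsto_add_atTop_nat 1)).sub_const 1
    refine h.congr fun N => ?_
    simp [Finset.sum_range_succ']
  have hlim : Filter.Tendsto (fun N : ℕ => ∑ j, ∑ l, c j * (starRingEnd ℂ) (c l) *
      ((∑ n ∈ Finset.range N, M j l ^ n / (n.factorial : ℂ)) *
        (∑ n ∈ Finset.range N, K j l ^ (n + 1) / ((n + 1).factorial : ℂ)))) Filter.atTop
      (nhds (∑ j, ∑ l, c j * (starRingEnd ℂ) (c l) *
      (Complex.exp (M j l) * (Complex.exp (K j l) - 1)))) :=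
    tendsto_finsetSum _ fun j _ => tendsto_finsetSum _ fun l _ =>
      ((hexp _).mul (hexp' _)).const_mul _
  refine ge_of_tendsto' hlim fun N => ?_
  have h1 := Matrix.posSemidef_sum (Finset.range N) fun n _ => aux_pow hM n
  have h2 := Matrix.posSemidef_sum (Finset.range N) fun n _ => aux_pow hK (n + 1)
  have h3 := (h1.hadamard h2).dotProduct_mulVec_nonneg (star c)
  refine h3.trans_eq ?_
  simp only [dotProduct, Matrix.mulVec, Finset.mul_sum]
  refine Finset.sum_congr rfl fun j _ => Finset.sum_congr rfl fun l _ => ?_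
  simp only [Matrix.hadamard_apply, Matrix.sum_apply, Matrix.of_apply, star_star, Pi.star_apply,
    starRingEnd_apply, ← Finset.mul_sum]
  ring

/-- if `‖A‖ ≤ 1` and `A* b = (I − A*A)^{1/2} v`, then the kernel
`(z,w) ↦ exp(‖b‖² + ‖v‖²) exp⟨z,w⟩ − exp⟨A z + b, A w + b⟩` is positive semi-definite. -/
theorem statement2 {E : Type*} [NormedAddCommGroup E] [InnerProductSpace ℂ E]
    [CompleteSpace E] (A : E →L[ℂ] E) (hA : ‖A‖ ≤ 1) (b v : E)
    (S : E →L[ℂ] E) (hS : IsPosSqrtOf S (1 - (adjoint A) ∘L A))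
    (hbv : adjoint A b = S v) :
    IsPSDKernel (fun z w : E =>
      (Real.exp (‖b‖ ^ 2 + ‖v‖ ^ 2) : ℂ) * Complex.exp ⟪w, z⟫_ℂ -
        Complex.exp ⟪A w + b, A z + b⟫_ℂ) := by
  intro m x c
  obtain ⟨⟨hsym, -⟩, hSS⟩ := hS
  have key : ∀ z w : E, ((‖b‖ ^ 2 + ‖v‖ ^ 2 : ℝ) : ℂ) + ⟪w, z⟫_ℂ =
      ⟪A w + b, A z + b⟫_ℂ + ⟪S w - v, S z - v⟫_ℂ := by
    intro z w
    have h1 : ⟪S w, S z⟫_ℂ = ⟪w, z⟫_ℂ - ⟪A w, A z⟫_ℂ := by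
      have : S (S z) = z - adjoint A (A z) := by
        simpa using congrArg (fun T : E →L[ℂ] E => T z) hSS
      rw [hsym, this, inner_sub_right, adjoint_inner_right]
    have h2 : ⟪A w, b⟫_ℂ = ⟪S w, v⟫_ℂ := by
      rw [← adjoint_inner_right, hbv, hsym]
    have h3 : ⟪b, A z⟫_ℂ = ⟪v, S z⟫_ℂ := by
      rw [← adjoint_inner_left, hbv, hsym]
    simp only [inner_add_left, inner_add_right, inner_sub_left, inner_sub_right, h1, h2, h3,
      inner_self_eq_norm_sq_to_K]
    push_cast
    simp only [Complex.coe_algebraMap]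
    ring
  have h := aux_main (Matrix.posSemidef_gram ℂ fun j => A (x j) + b)
    (Matrix.posSemidef_gram ℂ fun j => S (x j) - v) c
  refine h.trans_eq ?_
  refine Finset.sum_congr rfl fun j _ => Finset.sum_congr rfl fun l _ => ?_
  simp only [Matrix.gram_apply]
  rw [Complex.ofReal_exp, ← Complex.exp_add, key, Complex.exp_add]
  ring
end

section
/- Let E be a complex Hilbert space, u ∈ E, T a bounded self-adjoint operator on E, and M a real number. Define F(z,w) = ⟨Tz,w⟩ − ⟨z,u⟩ − ⟨u,w⟩ + M² for z, w ∈ E. Then the following are equivalent: (a) F is a positive semi-definite kernel on E; (b) for every z ∈ E, F(z,z) = ⟨Tz,z⟩ − 2·Re⟨z,u⟩ + M² is a nonnegative real number; (c) T is a positive operator and there exists û ∈ E with u = T^{1/2} û and ‖û‖ ≤ |M|. -/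
open scoped InnerProductSpace ComplexOrder
open ContinuousLinearMap

section Helpers
variable {E : Type*} [NormedAddCommGroup E] [InnerProductSpace ℂ E]

theorem aux_sum (u : E) (T : E →L[ℂ] E) (M : ℝ) (m : ℕ) (x : Fin m → E) (c : Fin m → ℂ) :
    ∑ j : Fin m, ∑ l : Fin m, c j * (starRingEnd ℂ) (c l) *
      (⟪x j, T (x l)⟫_ℂ - ⟪u, x l⟫_ℂ - ⟪x j, u⟫_ℂ + (M : ℂ) ^ 2) =
    ⟪∑ l, (starRingEnd ℂ) (c l) • x l, T (∑ l, (starRingEnd ℂ) (c l) • x l)⟫_ℂ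
      - (∑ l, c l) * ⟪u, ∑ l, (starRingEnd ℂ) (c l) • x l⟫_ℂ
      - (∑ l, (starRingEnd ℂ) (c l)) * ⟪∑ l, (starRingEnd ℂ) (c l) • x l, u⟫_ℂ
      + (∑ l, c l) * (∑ l, (starRingEnd ℂ) (c l)) * (M : ℂ) ^ 2 := by
  simp only [map_sum, map_smul, sum_inner, inner_sum, inner_smul_left, inner_smul_right,
    Complex.conj_conj]
  rw [mul_comm (∑ l, (starRingEnd ℂ) (c l)) (∑ i, c i * ⟪x i, u⟫_ℂ)]
  simp only [Finset.sum_mul, Finset.mul_sum, ← Finset.sum_sub_distrib,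
    ← Finset.sum_add_distrib]
  rw [Finset.sum_comm]
  refine Finset.sum_congr rfl fun j _ => ?_
  refine Finset.sum_congr rfl fun l _ => ?_
  ring

theorem aux_pos (S T : E →L[ℂ] E) (hS : IsPosSqrtOf S T) (u' w : E) (s : ℂ) (M : ℝ)
    (hu : ‖u'‖ ≤ |M|) :
    0 ≤ ⟪w, T w⟫_ℂ - s * ⟪S u', w⟫_ℂ - (starRingEnd ℂ) s * ⟪w, S u'⟫_ℂ
      + s * (starRingEnd ℂ) s * (M : ℂ) ^ 2 := by
  obtain ⟨⟨hsa, -⟩, rfl⟩ := hS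
  have h1 : ⟪w, (S ∘L S) w⟫_ℂ - s * ⟪S u', w⟫_ℂ - (starRingEnd ℂ) s * ⟪w, S u'⟫_ℂ
      + s * (starRingEnd ℂ) s * (M : ℂ) ^ 2 =
      ((‖S w - (starRingEnd ℂ) s • u'‖ ^ 2 + ‖s‖ ^ 2 * (M ^ 2 - ‖u'‖ ^ 2) : ℝ) : ℂ) := by
    have e0 : (S ∘L S) w = S (S w) := rfl
    rw [e0]
    push_cast
    have e1 := inner_self_eq_norm_sq_to_K (𝕜 := ℂ) (S w - (starRingEnd ℂ) s • u')
    have e2 := inner_self_eq_norm_sq_to_K (𝕜 := ℂ) u'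
    have e3 := Complex.mul_conj' s
    simp only [Complex.coe_algebraMap] at e1 e2
    rw [← e1, ← e2, ← e3]
    simp only [inner_sub_left, inner_sub_right, inner_smul_left, inner_smul_right,
      Complex.conj_conj, hsa]
    ring
  rw [h1]
  have : ‖u'‖ ^ 2 ≤ M ^ 2 := by
    rw [← sq_abs M]; gcongr
  have h2 : 0 ≤ ‖S w - (starRingEnd ℂ) s • u'‖ ^ 2 + ‖s‖ ^ 2 * (M ^ 2 - ‖u'‖ ^ 2) := by
    have : 0 ≤ M ^ 2 - ‖u'‖ ^ 2 := by linarith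
    positivity
  exact_mod_cast h2

theorem aux_real (a b M : ℝ) (h : ∀ t : ℝ, 0 ≤ a * t ^ 2 - 2 * b * t + M ^ 2) :
    0 ≤ a ∧ b ^ 2 ≤ a * M ^ 2 := by
  constructor
  · by_contra! ha
    have h1 := h (Real.sqrt ((M ^ 2 + 1) / (-a)))
    have h2 := h (-Real.sqrt ((M ^ 2 + 1) / (-a)))
    rw [neg_sq] at h2
    have hs := Real.sq_sqrt (x := (M ^ 2 + 1) / (-a)) (div_nonneg (by positivity) (by linarith))
    rw [hs] at h1 h2
    have : a * ((M ^ 2 + 1) / (-a)) = -(M ^ 2 + 1) := by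
      have := ha.ne
      rw [div_neg, mul_neg, mul_div_cancel₀ _ this]
    nlinarith
  · have := discrim_le_zero (a := a) (b := -2 * b) (c := M ^ 2) (fun t => by nlinarith [h t])
    unfold discrim at this
    nlinarith

theorem aux_b (u : E) (T : E →L[ℂ] E) (hT : ∀ x y : E, ⟪T x, y⟫_ℂ = ⟪x, T y⟫_ℂ) (M : ℝ)
    (h : ∀ z : E, 0 ≤ ⟪z, T z⟫_ℂ - ⟪u, z⟫_ℂ - ⟪z, u⟫_ℂ + (M : ℂ) ^ 2) (z : E) :
    0 ≤ (⟪z, T z⟫_ℂ).re ∧ (⟪u, z⟫_ℂ).re ^ 2 ≤ (⟪z, T z⟫_ℂ).re * M ^ 2 := by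
  apply aux_real
  intro t
  have h1 := (Complex.le_def.1 (h ((t : ℂ) • z))).1
  have e : (⟪z, u⟫_ℂ).re = (⟪u, z⟫_ℂ).re := by
    rw [← inner_conj_symm, Complex.conj_re]
  have e2 : ((M : ℂ) ^ 2).re = M ^ 2 := by
    rw [← Complex.ofReal_pow, Complex.ofReal_re]
  simp only [map_smul, inner_smul_left, inner_smul_right, Complex.conj_ofReal, Complex.add_re,
    Complex.sub_re, Complex.re_ofReal_mul, e, e2, Complex.zero_re] at h1
  nlinarith

theorem aux_b2 (u : E) (T : E →L[ℂ] E) (hT : ∀ x y : E, ⟪T x, y⟫_ℂ = ⟪x, T y⟫_ℂ) (M : ℝ)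
    (h : ∀ z : E, 0 ≤ ⟪z, T z⟫_ℂ - ⟪u, z⟫_ℂ - ⟪z, u⟫_ℂ + (M : ℂ) ^ 2) (z : E) :
    ‖⟪u, z⟫_ℂ‖ ^ 2 ≤ (⟪z, T z⟫_ℂ).re * M ^ 2 := by
  set b := ⟪u, z⟫_ℂ with hb
  have h0 := (aux_b u T hT M h z).1
  have h1 := (aux_b u T hT M h ((starRingEnd ℂ) b • z)).2
  simp only [map_smul, inner_smul_left, inner_smul_right, Complex.conj_conj, ← hb] at h1
  rw [← mul_assoc, Complex.conj_mul', ← Complex.ofReal_pow,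
    Complex.re_ofReal_mul, Complex.ofReal_re] at h1
  rcases eq_or_ne b 0 with hb0 | hb0
  · rw [hb0, norm_zero]; nlinarith [mul_nonneg h0 (sq_nonneg M)]
  · have : 0 < ‖b‖ ^ 2 := by positivity
    nlinarith

theorem aux_douglas [CompleteSpace E] (u : E) (S : E →L[ℂ] E)
    (hS : ∀ x y : E, ⟪S x, y⟫_ℂ = ⟪x, S y⟫_ℂ) (C : ℝ) (hC : 0 ≤ C)
    (h : ∀ z, ‖⟪u, z⟫_ℂ‖ ≤ C * ‖S z‖) : ∃ u' : E, u = S u' ∧ ‖u'‖ ≤ C := by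
  obtain ⟨g, hg⟩ := (S : E →ₗ[ℂ] E).rangeRestrict.exists_rightInverse_of_surjective
    (LinearMap.range_rangeRestrict _)
  have hg' : ∀ y, S (g y) = (y : E) := fun y => congrArg Subtype.val (LinearMap.congr_fun hg y)
  let φ : (LinearMap.range (S : E →ₗ[ℂ] E)) →L[ℂ] ℂ :=
    LinearMap.mkContinuous ((innerSL ℂ u : E →ₗ[ℂ] ℂ) ∘ₗ g) C (fun y => by
      have := h (g y)
      rw [hg' y] at this
      simpa using this)
  have hφ : ‖φ‖ ≤ C := LinearMap.mkContinuous_norm_le _ hC _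
  obtain ⟨ψ, hψ, hn⟩ := exists_extension_norm_eq _ φ
  refine ⟨(InnerProductSpace.toDual ℂ E).symm ψ, ?_, ?_⟩
  · refine ext_inner_right ℂ fun z => ?_
    rw [hS, InnerProductSpace.toDual_symm_apply]
    have e1 := hψ ⟨S z, LinearMap.mem_range_self (S : E →ₗ[ℂ] E) z⟩
    have e2 : φ ⟨S z, LinearMap.mem_range_self (S : E →ₗ[ℂ] E) z⟩ =
      ⟪u, g ⟨S z, LinearMap.mem_range_self (S : E →ₗ[ℂ] E) z⟩⟫_ℂ := rfl
    have e3 := h (g ⟨S z, LinearMap.mem_range_self (S : E →ₗ[ℂ] E) z⟩ - z)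
    rw [map_sub, hg', sub_self, norm_zero, mul_zero, norm_le_zero_iff, inner_sub_right,
      sub_eq_zero] at e3
    rw [← e3, ← e2, ← e1]
  · rw [LinearIsometryEquiv.norm_map, hn]; exact hφ

theorem aux_sqrt [CompleteSpace E] (T : E →L[ℂ] E)
    (hT : ∀ x y : E, ⟪T x, y⟫_ℂ = ⟪x, T y⟫_ℂ) (h : ∀ x, 0 ≤ ⟪T x, x⟫_ℂ) :
    ∃ S, IsPosSqrtOf S T := by
  have hp : (0 : E →L[ℂ] E) ≤ T := by
    rw [ContinuousLinearMap.nonneg_iff_isPositive]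
    exact ⟨hT, fun x => (Complex.le_def.1 (h x)).1⟩
  have hq := (ContinuousLinearMap.nonneg_iff_isPositive _).1 (CFC.sqrt_nonneg T)
  refine ⟨CFC.sqrt T, ⟨hq.isSymmetric, fun x => hq.inner_nonneg_left x⟩, ?_⟩
  exact CFC.sqrt_mul_sqrt_self T hp

theorem aux_cb (u : E) (T : E →L[ℂ] E) (M : ℝ)
    (h : ∃ S : E →L[ℂ] E, IsPosSqrtOf S T ∧ ∃ u' : E, u = S u' ∧ ‖u'‖ ≤ |M|) :
    IsPSDKernel (fun z w : E =>
        ⟪w, T z⟫_ℂ - ⟪u, z⟫_ℂ - ⟪w, u⟫_ℂ + (M : ℂ) ^ 2) := by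
  obtain ⟨S, hS, u', rfl, hu⟩ := h
  intro m x c
  rw [aux_sum, ← map_sum]
  exact aux_pos S T hS u' _ _ M hu

theorem aux_ab (u : E) (T : E →L[ℂ] E) (M : ℝ) (h : IsPSDKernel (fun z w : E =>
        ⟪w, T z⟫_ℂ - ⟪u, z⟫_ℂ - ⟪w, u⟫_ℂ + (M : ℂ) ^ 2)) (z : E) :
    0 ≤ ⟪z, T z⟫_ℂ - ⟪u, z⟫_ℂ - ⟪z, u⟫_ℂ + (M : ℂ) ^ 2 := by
  simpa using h 1 (fun _ => z) (fun _ => 1)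

theorem aux_bc [CompleteSpace E] (u : E) (T : E →L[ℂ] E)
    (hT : ∀ x y : E, ⟪T x, y⟫_ℂ = ⟪x, T y⟫_ℂ) (M : ℝ)
    (h : ∀ z : E, 0 ≤ ⟪z, T z⟫_ℂ - ⟪u, z⟫_ℂ - ⟪z, u⟫_ℂ + (M : ℂ) ^ 2) :
    (∀ z : E, 0 ≤ ⟪T z, z⟫_ℂ) ∧
        ∃ S : E →L[ℂ] E, IsPosSqrtOf S T ∧ ∃ u' : E, u = S u' ∧ ‖u'‖ ≤ |M| := by
  have hpos : ∀ z : E, 0 ≤ ⟪T z, z⟫_ℂ := fun z => by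
    refine Complex.le_def.2 ⟨?_, ?_⟩
    · rw [hT]; exact (aux_b u T hT M h z).1
    · have : (starRingEnd ℂ) ⟪T z, z⟫_ℂ = ⟪T z, z⟫_ℂ := by rw [inner_conj_symm, hT]
      exact (Complex.conj_eq_iff_im.1 this).symm
  obtain ⟨S, hS⟩ := aux_sqrt T hT hpos
  refine ⟨hpos, S, hS, aux_douglas u S hS.1.1 _ (abs_nonneg M) fun z => ?_⟩
  have h1 := aux_b2 u T hT M h z
  have e0 : T z = S (S z) := by rw [← hS.2]; rfl
  rw [e0, ← hS.1.1] at h1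
  have e : (⟪S z, S z⟫_ℂ).re = ‖S z‖ ^ 2 := inner_self_eq_norm_sq (𝕜 := ℂ) (S z)
  rw [e] at h1
  refine abs_le_of_sq_le_sq' ?_ (by positivity) |>.2
  rw [mul_pow, sq_abs]; linarith

end Helpers

/-- for a self-adjoint `T`, `u ∈ E` and `M ∈ ℝ`, with
`F(z,w) = ⟨T z, w⟩ − ⟨z, u⟩ − ⟨u, w⟩ + M²`, the following are equivalent:
(a) `F` is a positive semi-definite kernel; (b) `F(z,z) ≥ 0` (a nonnegative real) for all `z`;
(c) `T` is positive and `u = T^{1/2} u'` for some `u'` with `‖u'‖ ≤ |M|`. -/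
theorem statement3 {E : Type*} [NormedAddCommGroup E] [InnerProductSpace ℂ E]
    [CompleteSpace E] (u : E) (T : E →L[ℂ] E)
    (hT : ∀ x y : E, ⟪T x, y⟫_ℂ = ⟪x, T y⟫_ℂ) (M : ℝ) :
    (IsPSDKernel (fun z w : E =>
        ⟪w, T z⟫_ℂ - ⟪u, z⟫_ℂ - ⟪w, u⟫_ℂ + (M : ℂ) ^ 2) ↔
      ∀ z : E, 0 ≤ ⟪z, T z⟫_ℂ - ⟪u, z⟫_ℂ - ⟪z, u⟫_ℂ + (M : ℂ) ^ 2) ∧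
    ((∀ z : E, 0 ≤ ⟪z, T z⟫_ℂ - ⟪u, z⟫_ℂ - ⟪z, u⟫_ℂ + (M : ℂ) ^ 2) ↔
      (∀ z : E, 0 ≤ ⟪T z, z⟫_ℂ) ∧
        ∃ S : E →L[ℂ] E, IsPosSqrtOf S T ∧ ∃ u' : E, u = S u' ∧ ‖u'‖ ≤ |M|) := by
  exact ⟨⟨aux_ab u T M, fun h => aux_cb u T M (aux_bc u T hT M h).2⟩,
    ⟨aux_bc u T hT M, fun h => aux_ab u T M (aux_cb u T M h.2)⟩⟩
end

section
/- Let X be a set and let F : X × X → ℂ be a positive semi-definite kernel on X. Then the function (x,y) ↦ exp(F(x,y)) − 1 is also a positive semi-definite kernel on X. -/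
open scoped ComplexOrder

theorem quad_eq_s6 {m : ℕ} (A : Matrix (Fin m) (Fin m) ℂ) (c : Fin m → ℂ) :
    ∑ j : Fin m, ∑ l : Fin m, c j * (starRingEnd ℂ) (c l) * A l j
      = dotProduct (star c) (A.mulVec c) := by
  rw [Finset.sum_comm]
  simp only [dotProduct, Matrix.mulVec, Finset.mul_sum]
  refine Finset.sum_congr rfl fun l _ => Finset.sum_congr rfl fun j _ => ?_
  simp only [Pi.star_apply, starRingEnd_apply]
  ring

theorem posSemidef_of_quad {m : ℕ} (A : Matrix (Fin m) (Fin m) ℂ)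
    (h : ∀ c : Fin m → ℂ, 0 ≤ dotProduct (star c) (A.mulVec c)) : A.PosSemidef := by
  rw [← Matrix.isPositive_toEuclideanLin_iff, LinearMap.isPositive_iff_complex]
  intro v
  have h1 := h v.ofLp
  have h2 : inner ℂ (A.toEuclideanLin v) v = star (dotProduct (star v.ofLp) (A.mulVec v.ofLp)) := by
    rw [← inner_conj_symm, starRingEnd_apply]
    congr 1
    rw [EuclideanSpace.inner_eq_star_dotProduct, dotProduct_comm]
    rfl
  rw [h2, (IsSelfAdjoint.of_nonneg h1).star_eq]
  rw [Complex.nonneg_iff] at h1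
  refine ⟨Complex.ext ?_ ?_, h1.1⟩
  · simp
  · simpa using h1.2

theorem posSemidef_pow {m : ℕ} (A : Matrix (Fin m) (Fin m) ℂ) (hA : A.PosSemidef) (n : ℕ) :
    (Matrix.of fun i j => A i j ^ (n + 1)).PosSemidef := by
  induction n with
  | zero =>
    have : (Matrix.of fun i j => A i j ^ (0 + 1)) = A := by ext; simp
    rwa [this]
  | succ k ih =>
    have : (Matrix.of fun i j => A i j ^ (k + 1 + 1))
        = Matrix.hadamard (Matrix.of fun i j => A i j ^ (k + 1)) A := by
      ext i j; simp [pow_succ]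
    rw [this]
    exact ih.hadamard hA

theorem hasSum_exp_sub_one (z : ℂ) :
    HasSum (fun n : ℕ => z ^ (n + 1) / ((n + 1).factorial : ℂ)) (Complex.exp z - 1) := by
  have h : HasSum (fun n : ℕ => z ^ n / (n.factorial : ℂ)) (Complex.exp z) := by
    rw [Complex.exp_eq_exp_ℂ]
    exact NormedSpace.expSeries_div_hasSum_exp z
  have := (hasSum_nat_add_iff' 1).mpr h
  simpa using this

/-- if `F` is a positive semi-definite kernel on `X`, then so is
`(x,y) ↦ exp (F x y) − 1`. -/
theorem statement6 {X : Type*} (F : X → X → ℂ) (hF : IsPSDKernel F) :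
    IsPSDKernel (fun x y : X => Complex.exp (F x y) - 1) := by
  intro m x c
  have hA : (Matrix.of fun l j => F (x l) (x j)).PosSemidef := by
    refine posSemidef_of_quad _ fun c => ?_
    rw [← quad_eq_s6]
    exact hF m x c
  have hs : HasSum (fun n : ℕ => ∑ j : Fin m, ∑ l : Fin m, c j * (starRingEnd ℂ) (c l) *
      (F (x l) (x j) ^ (n + 1) / ((n + 1).factorial : ℂ)))
      (∑ j : Fin m, ∑ l : Fin m, c j * (starRingEnd ℂ) (c l) *
        (Complex.exp (F (x l) (x j)) - 1)) :=
    hasSum_sum fun j _ => hasSum_sum fun l _ => (hasSum_exp_sub_one _).mul_left _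
  refine hs.nonneg fun n => ?_
  have h1 := (posSemidef_pow _ hA n).dotProduct_mulVec_nonneg c
  rw [← quad_eq_s6] at h1
  have h2 : (0 : ℂ) ≤ (((n + 1).factorial : ℝ)⁻¹ : ℝ) := by
    rw [Complex.zero_le_real]; positivity
  have h3 := mul_nonneg h1 h2
  convert h3 using 1
  simp only [Finset.sum_mul]
  refine Finset.sum_congr rfl fun j _ => Finset.sum_congr rfl fun l _ => ?_
  simp only [Matrix.of_apply]
  push_cast
  ring
end

section
/- Let E be a complex Hilbert space, A a bounded linear operator on E with ‖A‖ ≤ 1, and b ∈ E. Then ⟨Aζ, b⟩ = 0 for every ζ ∈ E with ‖Aζ‖ = ‖ζ‖ if and only if A*b belongs to the closure of the range of (I − A*A)^{1/2}. -/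
open scoped InnerProductSpace ComplexOrder
open ContinuousLinearMap

/-- for `‖A‖ ≤ 1` and `b ∈ E`, one has `⟨A ζ, b⟩ = 0` for every `ζ` with
`‖A ζ‖ = ‖ζ‖` iff `A* b` lies in the closure of the range of `(I − A*A)^{1/2}`.
(The paper's `⟨A ζ, b⟩` is `⟪b, A ζ⟫_ℂ` in Mathlib's convention.) -/
theorem statement8 {E : Type*} [NormedAddCommGroup E] [InnerProductSpace ℂ E]
    [CompleteSpace E] (A : E →L[ℂ] E) (hA : ‖A‖ ≤ 1) (b : E)
    (S : E →L[ℂ] E) (hS : IsPosSqrtOf S (1 - (adjoint A) ∘L A)) :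
    (∀ ζ : E, ‖A ζ‖ = ‖ζ‖ → ⟪b, A ζ⟫_ℂ = 0) ↔
      adjoint A b ∈ closure (Set.range ⇑S) := by
  obtain ⟨⟨hsym, -⟩, hsq⟩ := hS
  have key : ∀ ζ : E, ‖A ζ‖ = ‖ζ‖ ↔ S ζ = 0 := by
    intro ζ
    have h1 : ⟪S ζ, S ζ⟫_ℂ = ⟪ζ, ζ⟫_ℂ - ⟪A ζ, A ζ⟫_ℂ := by
      have h2 : S (S ζ) = ζ - adjoint A (A ζ) := by
        have := congrArg (fun T : E →L[ℂ] E => T ζ) hsq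
        simpa using this
      rw [hsym, h2, inner_sub_right, adjoint_inner_right]
    simp only [inner_self_eq_norm_sq_to_K] at h1
    have h3 : ‖S ζ‖ ^ 2 = ‖ζ‖ ^ 2 - ‖A ζ‖ ^ 2 := by exact_mod_cast h1
    constructor
    · intro h
      rw [h, sub_self] at h3
      simpa using h3
    · intro h
      rw [h, norm_zero] at h3
      exact (sq_eq_sq₀ (norm_nonneg _) (norm_nonneg _)).1 (by linarith)
  have hrange : adjoint A b ∈ closure (Set.range ⇑S) ↔
      adjoint A b ∈ (S : E →ₗ[ℂ] E).range.topologicalClosure := by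
    rw [← SetLike.mem_coe, Submodule.topologicalClosure_coe, LinearMap.coe_range]
    rfl
  have hs : (S : E →ₗ[ℂ] E).IsSymmetric := fun x y => hsym x y
  rw [hrange, ← Submodule.orthogonal_orthogonal_eq_closure, hs.orthogonal_range,
    Submodule.mem_orthogonal']
  refine forall_congr' fun ζ => ?_
  rw [key, adjoint_inner_left]
  rfl
end

section
/- Let H = ℓ² be the Hilbert space of square-summable complex sequences indexed by the positive integers, with standard orthonormal basis (e_m)_{m≥1}. Let (α_m)_{m≥1} be real numbers with (1 − m^{−3})^{1/2} < α_m < 1 for every m ≥ 1, let A be the bounded diagonal operator on H determined by (Az)_m = α_m z_m for all z ∈ H and m ≥ 1, and let b ∈ H be the vector with b_m = 1/m for all m ≥ 1. Then sup_{z ∈ H} (‖Az + b‖² − ‖z‖²) = +∞; that is, for every real C there exists z ∈ H with ‖Az + b‖² − ‖z‖² > C. (Consequently, for φ(z) = Az + b, the composition operator C_φ is not bounded on the Segal–Bargmann space over H, even though ⟨Aζ, b⟩ = 0 whenever ‖Aζ‖ = ‖ζ‖.) -/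
/-- on `H = ℓ²(ℕ+, ℂ)`, let `A` be the diagonal operator with diagonal entries
`α m` satisfying `(1 − m⁻³)^{1/2} < α m < 1`, and let `b` be the vector with entries `1/m`.
Then `sup_{z} (‖A z + b‖² − ‖z‖²) = ∞`, i.e. for every real `C` there is `z` with
`‖A z + b‖² − ‖z‖² > C` (so the composition operator induced by `z ↦ A z + b` is unbounded on
the Segal–Bargmann space over `H`). -/
theorem statement10 (α : ℕ+ → ℝ)
    (hα : ∀ m : ℕ+, Real.sqrt (1 - (((m : ℕ) : ℝ))⁻¹ ^ 3) < α m ∧ α m < 1)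
    (A : lp (fun _ : ℕ+ => ℂ) 2 →L[ℂ] lp (fun _ : ℕ+ => ℂ) 2)
    (hA : ∀ (z : lp (fun _ : ℕ+ => ℂ) 2) (m : ℕ+), (A z) m = (α m : ℂ) * z m)
    (b : lp (fun _ : ℕ+ => ℂ) 2)
    (hb : ∀ m : ℕ+, b m = 1 / ((m : ℕ) : ℂ)) :
    ∀ C : ℝ, ∃ z : lp (fun _ : ℕ+ => ℂ) 2, C < ‖A z + b‖ ^ 2 - ‖z‖ ^ 2 := by
  intro C
  obtain ⟨n, hn⟩ := exists_nat_gt (C + 1)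
  let m : ℕ+ := n.succPNat
  obtain ⟨h1, h2⟩ := hα m
  have hmr : ((m : ℕ) : ℝ) = n + 1 := by simp [m]
  have hm1 : (1 : ℝ) ≤ ((m : ℕ) : ℝ) := by exact_mod_cast m.2
  generalize hM : ((m : ℕ) : ℝ) = M at *
  have hM0 : 0 < M := by linarith
  have ha0 : 0 < α m := lt_of_le_of_lt (Real.sqrt_nonneg _) h1
  have hsq : 1 - M⁻¹ ^ 3 ≤ (α m) ^ 2 := ((Real.sqrt_lt' ha0).1 h1).le
  let z : lp (fun _ : ℕ+ => ℂ) 2 := lp.single 2 m ((α m * M ^ 2 : ℝ) : ℂ)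
  have hz : ‖z‖ = α m * M ^ 2 := by
    simp only [z]
    rw [lp.norm_single (by norm_num), Complex.norm_real, Real.norm_of_nonneg (by positivity)]
  have hAz : A z = (α m : ℂ) • z := by
    ext k
    rw [hA, lp.coeFn_smul, Pi.smul_apply, smul_eq_mul]
    by_cases hk : k = m
    · subst hk
      rfl
    · simp [z, lp.single_apply, hk]
  have hzb : RCLike.re (inner ℂ (A z) b) = α m * (α m * M) := by
    have hbm : b m = ((M⁻¹ : ℝ) : ℂ) := by
      rw [hb, ← hM]; push_cast; simp
    rw [hAz, inner_smul_left]
    simp only [z]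
    rw [lp.inner_single_left, hbm]
    simp only [RCLike.inner_apply, Complex.conj_ofReal, ← Complex.ofReal_mul]
    rw [RCLike.re_eq_complex_re, Complex.ofReal_re]
    field_simp
  refine ⟨z, ?_⟩
  rw [@norm_add_sq ℂ, hzb, hAz, norm_smul, hz, Complex.norm_real, Real.norm_of_nonneg ha0.le]
  have hb0 : 0 ≤ ‖b‖ ^ 2 := by positivity
  have e1 : (1 - M⁻¹ ^ 3) * ((α m) ^ 2 * M ^ 4) = (α m) ^ 2 * M ^ 4 - (α m) ^ 2 * M := by
    field_simp
  have e2 := mul_le_mul_of_nonneg_right hsq (show 0 ≤ (α m) ^ 2 * M ^ 4 by positivity)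
  have e3 := mul_le_mul_of_nonneg_right hsq hM0.le
  have e4 : M⁻¹ ^ 3 * M ≤ 1 := by
    have : M⁻¹ ^ 3 * M = M⁻¹ ^ 2 := by field_simp
    rw [this]
    exact pow_le_one₀ (by positivity) (inv_le_one_of_one_le₀ hm1)
  nlinarith
end

section
/- Let n ≥ 1 and let F : ℂⁿ → ℂ be an entire function for which there exists a real constant C such that |F(z)|² ≤ ‖z‖² + C for all z ∈ ℂⁿ. Then F is affine with linear part of norm at most one: there exists a vector a ∈ ℂⁿ with ‖a‖ ≤ 1 such that F(z) = F(0) + ⟨z, a⟩ for all z ∈ ℂⁿ. -/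
open scoped InnerProductSpace

/-- An entire function of one variable with growth `A‖t‖ + B` is affine, with slope at most `A`. -/
theorem affine_of_linear_growth (g : ℂ → ℂ) (hg : Differentiable ℂ g) (A B : ℝ)
    (h : ∀ t, ‖g t‖ ≤ A * ‖t‖ + B) (hA : 0 ≤ A) :
    ‖deriv g 0‖ ≤ A ∧ g 1 = g 0 + deriv g 0 := by
  have hd : ∀ c, ‖deriv g c‖ ≤ A := by
    intro c
    have h1 : ∀ R : ℝ, 0 < R → ‖deriv g c‖ ≤ A + (A * ‖c‖ + B) / R := by
      intro R hR
      have := Complex.norm_deriv_le_of_forall_mem_sphere_norm_le (c := c) (R := R)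
        (C := A * (‖c‖ + R) + B) hR hg.diffContOnCl (by
          intro z hz
          have hz' : ‖z‖ ≤ ‖c‖ + R := by
            have e : ‖z - c‖ = R := by simpa [dist_eq_norm] using hz
            have := norm_add_le c (z - c)
            rw [add_sub_cancel, e] at this
            exact this
          have := mul_le_mul_of_nonneg_left hz' hA
          linarith [h z])
      refine this.trans (le_of_eq ?_)
      field_simp
      ring
    have h2 : Filter.Tendsto (fun R : ℝ => A + (A * ‖c‖ + B) / R) Filter.atTop (nhds (A + 0)) :=
      tendsto_const_nhds.add (tendsto_const_nhds.div_atTop Filter.tendsto_id)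
    rw [add_zero] at h2
    exact ge_of_tendsto h2 ((Filter.eventually_gt_atTop 0).mono h1)
  refine ⟨hd 0, ?_⟩
  have hdd : Differentiable ℂ (deriv g) := fun z =>
    (hg.analyticAt z).deriv.differentiableAt
  have hc : ∀ c, deriv g c = deriv g 0 := fun c =>
    hdd.apply_eq_apply_of_bounded
      (isBounded_iff_forall_norm_le.2 ⟨A, by rintro _ ⟨x, rfl⟩; exact hd x⟩) c 0
  have hk : ∀ x, HasDerivAt (fun t => g t - t * deriv g 0) 0 x := by
    intro x
    have := (hg x).hasDerivAt.sub ((hasDerivAt_id x).mul_const (deriv g 0))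
    rw [hc x] at this
    rw [one_mul, sub_self] at this
    exact this
  have := is_const_of_deriv_eq_zero (fun x => (hk x).differentiableAt)
    (fun x => (hk x).deriv) 1 0
  simp only [one_mul, zero_mul, sub_zero] at this
  rw [← this]; ring

/-- if `F : ℂⁿ → ℂ` is entire and `|F z|² ≤ ‖z‖² + C` for all `z`, then `F` is
affine with linear part of norm at most one: `F z = F 0 + ⟨z, a⟩` for some `a` with `‖a‖ ≤ 1`
(the paper's `⟨z, a⟩` is `⟪a, z⟫_ℂ` in Mathlib's convention). -/
theorem statement19 (n : ℕ) (hn : 1 ≤ n)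
    (F : EuclideanSpace ℂ (Fin n) → ℂ) (hF : Differentiable ℂ F)
    (C : ℝ) (hC : ∀ z : EuclideanSpace ℂ (Fin n), ‖F z‖ ^ 2 ≤ ‖z‖ ^ 2 + C) :
    ∃ a : EuclideanSpace ℂ (Fin n), ‖a‖ ≤ 1 ∧
      ∀ z : EuclideanSpace ℂ (Fin n), F z = F 0 + ⟪a, z⟫_ℂ := by
  have key : ∀ z, ‖fderiv ℂ F 0 z‖ ≤ ‖z‖ ∧ F z = F 0 + fderiv ℂ F 0 z := by
    intro z
    have hl : ∀ t : ℂ, HasDerivAt (fun t : ℂ => t • z) z t := fun t => by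
      simpa using (hasDerivAt_id t).smul_const z
    have hg : Differentiable ℂ (fun t : ℂ => F (t • z)) :=
      hF.comp (fun t => (hl t).differentiableAt)
    have hder : deriv (fun t : ℂ => F (t • z)) 0 = fderiv ℂ F 0 z := by
      have h0 : HasFDerivAt F (fderiv ℂ F 0) ((0 : ℂ) • z) := by
        rw [zero_smul]; exact (hF 0).hasFDerivAt
      exact (h0.comp_hasDerivAt (0 : ℂ) (hl 0)).deriv
    have := affine_of_linear_growth _ hg ‖z‖ (Real.sqrt |C|) (by
      intro t
      have h1 := hC (t • z)
      rw [norm_smul] at h1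
      have h2 := Real.sq_sqrt (abs_nonneg C)
      have h3 := Real.sqrt_nonneg |C|
      have h4 := le_abs_self C
      have h5 : 0 ≤ ‖z‖ * ‖t‖ := by positivity
      refine (sq_le_sq₀ (norm_nonneg _) (by positivity)).1 ?_
      nlinarith [mul_nonneg h5 h3]) (norm_nonneg z)
    rw [hder] at this
    simpa using this
  refine ⟨(InnerProductSpace.toDual ℂ _).symm (fderiv ℂ F 0), ?_, ?_⟩
  · rw [LinearIsometryEquiv.norm_map]
    exact ContinuousLinearMap.opNorm_le_bound _ zero_le_one (fun z => by simpa using (key z).1)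
  · intro z
    rw [InnerProductSpace.toDual_symm_apply]
    exact (key z).2
end
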